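/- Let N ≥ 1 and m ≥ 1 be integers. Then the limit as q → 1 (q real, q ≠ 1) of (m/(1-q))·log( Γ(N+1)·Γ(q+1) / Γ(N+q) ) equals m·(ψ(N+1) − ψ(2)). (This is the q → 1 limit of the minimal Rényi–Wehrl entropy S^{(q)}_min = (m/(1-q))·log(Γ(N+1)Γ(q+1)/Γ(N+q)) for the representation [1]^{⊗m} of SU(N)×⋯×SU(N) (m factors), giving the expected minimal Wehrl entropy for m distinguishable particles.) -/

import Mathlib

open Filter

/-- The digamma function `ψ(x) = d/dx log Γ(x)`. -/
noncomputable def digamma (x : ℝ) : ℝ := deriv (fun t => Real.log (Real.Gamma t)) x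

/-! The function `F q = log (Γ(N+1) Γ(q+1) / Γ(N+q))` vanishes at `q = 1`, so `F q / (1 - q)` is
minus a difference quotient of `F` at `1` and tends to `-F'(1) = ψ(N+1) - ψ(2)`. -/

open scoped Topology

-- As `Real.log` is `log |·|`, `digamma` is `Γ'/Γ` off the poles of `Γ`, also where `Γ < 0`.
theorem hasDerivAt_log_Gamma {x : ℝ} (hx : ∀ k : ℕ, x ≠ -k) :
    HasDerivAt (fun t => Real.log (Real.Gamma t)) (digamma x) x :=
  ((Real.differentiableAt_Gamma hx).log (Real.Gamma_ne_zero hx)).hasDerivAt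

theorem eventually_Gamma_ne_zero {x : ℝ} (hx : ∀ k : ℕ, x ≠ -k) :
    ∀ᶠ t in 𝓝 x, Real.Gamma t ≠ 0 :=
  (Real.differentiableAt_Gamma hx).continuousAt.eventually_ne (Real.Gamma_ne_zero hx)

theorem hasDerivAt_log_const_mul_Gamma_div_Gamma {a b c q : ℝ} (hc : c ≠ 0)
    (ha : ∀ k : ℕ, q + a ≠ -k) (hb : ∀ k : ℕ, b + q ≠ -k) :
    HasDerivAt (fun t => Real.log (c * Real.Gamma (t + a) / Real.Gamma (b + t)))
      (digamma (q + a) - digamma (b + q)) q := by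
  have hsplit : HasDerivAt
      (fun t => Real.log c + Real.log (Real.Gamma (t + a)) - Real.log (Real.Gamma (b + t)))
      (digamma (q + a) - digamma (b + q)) q :=
    (((hasDerivAt_log_Gamma ha).comp_add_const q a).const_add (Real.log c)).sub
      ((hasDerivAt_log_Gamma hb).comp_const_add b q)
  have hnum : ∀ᶠ t in 𝓝 q, Real.Gamma (t + a) ≠ 0 :=
    (continuous_add_const a).continuousAt.eventually (eventually_Gamma_ne_zero ha)
  have hden : ∀ᶠ t in 𝓝 q, Real.Gamma (b + t) ≠ 0 :=
    (continuous_const_add b).continuousAt.eventually (eventually_Gamma_ne_zero hb)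
  refine hsplit.congr_of_eventuallyEq ?_
  filter_upwards [hnum, hden] with t hnum_t hden_t
  rw [Real.log_div (mul_ne_zero hc hnum_t) hden_t, Real.log_mul hc hnum_t]

theorem tendsto_div_sub_mul_of_hasDerivAt {f : ℝ → ℝ} {f' a : ℝ} (hf : HasDerivAt f f' a)
    (hfa : f a = 0) (c : ℝ) :
    Tendsto (fun q => c / (a - q) * f q) (𝓝[≠] a) (𝓝 (c * -f')) := by
  have hslope (q : ℝ) : c * -slope f a q = c / (a - q) * f q := by
    rw [slope_def_field, hfa, sub_zero, ← div_neg, neg_sub]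
    ring
  exact ((hasDerivAt_iff_tendsto_slope.mp hf).neg.const_mul c).congr hslope

theorem renyi_wehrl_min_limit_distinguishable_general (x c : ℝ) (hx : ∀ k : ℕ, x + 1 ≠ -k) :
    Tendsto (fun q : ℝ =>
        (c / (1 - q)) * Real.log (Real.Gamma (x + 1) * Real.Gamma (q + 1) / Real.Gamma (x + q)))
      (𝓝[≠] 1) (𝓝 (c * (digamma (x + 1) - digamma 2))) := by
  have hΓ : Real.Gamma (x + 1) ≠ 0 := Real.Gamma_ne_zero hx
  have htwo (k : ℕ) : (1 : ℝ) + 1 ≠ -k := by linarith [k.cast_nonneg (α := ℝ)]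
  have hderiv := hasDerivAt_log_const_mul_Gamma_div_Gamma hΓ htwo hx
  have hzero : Real.log (Real.Gamma (x + 1) * Real.Gamma (1 + 1) / Real.Gamma (x + 1)) = 0 := by
    rw [one_add_one_eq_two, Real.Gamma_two, mul_one, div_self hΓ, Real.log_one]
  simpa only [neg_sub, one_add_one_eq_two] using
    tendsto_div_sub_mul_of_hasDerivAt hderiv hzero c

/-- The `q → 1` limit of the minimal Rényi–Wehrl entropy
`S^{(q)}_min = (m/(1-q))·log(Γ(N+1)Γ(q+1)/Γ(N+q))` for the representation `[1]^{⊗m}` of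
`SU(N) × ⋯ × SU(N)` is the expected minimal Wehrl entropy `m(ψ(N+1) − ψ(2))` for `m`
distinguishable particles. -/
theorem renyi_wehrl_min_limit_distinguishable (N m : ℕ) (hN : 1 ≤ N) (hm : 1 ≤ m) :
    Tendsto (fun q : ℝ =>
        ((m : ℝ) / (1 - q)) * Real.log (Real.Gamma ((N : ℝ) + 1) * Real.Gamma (q + 1) /
          Real.Gamma ((N : ℝ) + q)))
      (nhdsWithin 1 {(1 : ℝ)}ᶜ)
      (nhds ((m : ℝ) * (digamma ((N : ℝ) + 1) - digamma 2))) :=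
  renyi_wehrl_min_limit_distinguishable_general N m fun k => by
    linarith [N.cast_nonneg (α := ℝ), k.cast_nonneg (α := ℝ)]
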